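/- arXiv:2001.04644 — 3 statements merged into one kernel-verified Lean document; each statement's English description precedes it below -/
import Mathlib

section
/- Let G be a digraph on N containing a single edge ij that lies on a cycle of G (so that i and j belong to the same strongly connected component). Then for any utility parameters (γ,H,c), u_i(G + ji) − u_i(G) = c·Σ_{k ∈ N_in^s(i,G)} (1/|P_i(G,k)| − 1/|P_i(G+ji,k)|) ≥ 0; in particular, a consensual agent i consents to the addition of the edge ji. -/
/-!
Since `ij` lies on a cycle, `i` already reaches `j` and `j` reaches `i` in `G`. Adding `ji` therefore
leaves reachability, hence the strongly connected components, unchanged (`reach_insert_of_reach`),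
and the new edge is internal to a component, so it creates no arc of the condensation
(`condArc_insert_of_sameSCC`). Consequently the level of `i` is the same in both networks
(`level_insert_of_sameSCC`). The out-neighborhood of `i` does not change because the new edge starts
at `j ≠ i`, and its subordinates do not change because `j` is already an out-neighbor of `i`. So
the utilities differ only through the cardinalities of the sets `P_i(·, k)`, which can only grow when
an edge is added (`Pset_mono`); this gives both the formula and its sign.
-/

open Finset MeasureTheory ProbabilityTheory

attribute [local instance 10] Classical.propDecidable

noncomputable section

/-- A digraph on the agent set `Fin n`: a finite set of ordered pairs (directed edges). -/
abbrev Network (n : ℕ) := Finset (Fin n × Fin n)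

variable {n : ℕ}

/-- Edges only join distinct nodes. -/
def validNetwork (G : Network n) : Prop := ∀ p ∈ G, p.1 ≠ p.2

/-- Out-neighborhood `N_out(i,G)`. -/
def Nout (G : Network n) (i : Fin n) : Finset (Fin n) := univ.filter fun j => (i, j) ∈ G

/-- The set of subordinates `N_in^s(i,G)`. -/
def NinS (G : Network n) (i : Fin n) : Finset (Fin n) :=
  univ.filter fun j => (j, i) ∈ G ∧ (i, j) ∉ G

/-- `P_i(G,k) = {i} ∪ {j : kj ∈ G and ij, ji ∈ G}`. -/
def Pset (G : Network n) (i k : Fin n) : Finset (Fin n) :=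
  insert i (univ.filter fun j => (k, j) ∈ G ∧ (i, j) ∈ G ∧ (j, i) ∈ G)

/-- `P_i(G) = ⋂_{k ∈ N_in^s(i,G)} P_i(G,k)`. -/
def Pall (G : Network n) (i : Fin n) : Finset (Fin n) :=
  univ.filter fun j => ∀ k ∈ NinS G i, j ∈ Pset G i k

/-- Reachability along directed edges. -/
def reach (G : Network n) : Fin n → Fin n → Prop :=
  Relation.ReflTransGen fun a b => (a, b) ∈ G

/-- `i` and `j` belong to the same strongly connected component. -/
def sameSCC (G : Network n) (i j : Fin n) : Prop := reach G i j ∧ reach G j i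

/-- The strongly connected component `Γ(i,G)` of `i`. -/
def sccSet (G : Network n) (i : Fin n) : Finset (Fin n) := univ.filter fun j => sameSCC G i j

/-- An arc of the condensation `C(G)`, between the SCC of `a` and the SCC of `b`. -/
def condArc (G : Network n) (a b : Fin n) : Prop :=
  ¬ sameSCC G a b ∧ ∃ a' b' : Fin n, sameSCC G a a' ∧ sameSCC G b b' ∧ (a', b') ∈ G

/-- The SCC of `a` is a source of the condensation `C(G)`. -/
def isSourceSCC (G : Network n) (a : Fin n) : Prop := ∀ b, ¬ condArc G b a

/-- The level `ℓ_i(C(G))`: the largest number of arcs on a directed path in the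
condensation `C(G)` from a source of `C(G)` to the SCC of `i`. -/
def level (G : Network n) (i : Fin n) : ℕ :=
  sSup {m : ℕ | ∃ f : ℕ → Fin n, isSourceSCC G (f 0) ∧ sameSCC G (f m) i ∧
    ∀ t, t < m → condArc G (f t) (f (t + 1))}

/-- The utility `u_i(G)` of agent `i` in the network `G`. -/
def utility (γ c : ℝ) (H : ℕ → ℝ) (G : Network n) (i : Fin n) : ℝ :=
  ((Nout G i).card : ℝ) * γ + H (level G i)
    - c * ∑ k ∈ NinS G i, (1 : ℝ) / ((Pset G i k).card : ℝ)

/-- Utility parameters: `γ > 0`, `c > 0`, `H` strictly increasing with `H 0 ≥ 0`. -/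
def UtilityParams (γ c : ℝ) (H : ℕ → ℝ) : Prop :=
  0 < γ ∧ 0 < c ∧ StrictMono H ∧ 0 ≤ H 0

/-- Equilibrium network for non-consensual agents. -/
def eqNonConsensual (γ c : ℝ) (H : ℕ → ℝ) (G : Network n) : Prop :=
  ∀ i j : Fin n, i ≠ j →
    ((i, j) ∈ G → utility γ c H (G.erase (i, j)) i < utility γ c H G i) ∧
    ((i, j) ∉ G → utility γ c H (insert (i, j) G) i < utility γ c H G i)

/-- Equilibrium network for consensual agents. -/
def eqConsensual (γ c : ℝ) (H : ℕ → ℝ) (G : Network n) : Prop :=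
  ∀ i j : Fin n, i ≠ j →
    ((i, j) ∈ G → utility γ c H (G.erase (i, j)) i < utility γ c H G i) ∧
    ((i, j) ∉ G →
      utility γ c H (insert (i, j) G) i < utility γ c H G i ∨
        (utility γ c H G i ≤ utility γ c H (insert (i, j) G) i ∧
          utility γ c H (insert (i, j) G) j < utility γ c H G j))

/-- `G` has no directed cycles: every edge joining two nodes of the same SCC
is an undirected edge. -/
def noDirectedCycles (G : Network n) : Prop :=
  ∀ i j : Fin n, (i, j) ∈ G → sameSCC G i j → (j, i) ∈ G

/-- Reachability forgetting edge directions. -/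
def weakReach (G : Network n) : Fin n → Fin n → Prop :=
  Relation.ReflTransGen fun a b => (a, b) ∈ G ∨ (b, a) ∈ G

/-- `G` is weakly connected. -/
def weaklyConnected (G : Network n) : Prop := ∀ i j : Fin n, weakReach G i j

/-- Every SCC of `G` is a complete connected component: any two distinct nodes of
the same SCC are joined by an undirected edge. -/
def completeSCCs (G : Network n) : Prop :=
  ∀ i j : Fin n, i ≠ j → sameSCC G i j → (i, j) ∈ G ∧ (j, i) ∈ G

/-- The undirected edge `ij, ji ∈ G` is critical: `Γ(i,G) ≠ Γ(i, G - ij)`. -/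
def criticalEdge (G : Network n) (i j : Fin n) : Prop :=
  (i, j) ∈ G ∧ (j, i) ∈ G ∧
    {k : Fin n | sameSCC G i k} ≠ {k : Fin n | sameSCC (G.erase (i, j)) i k}

/-- `L_ℓ(G) = |{j : ℓ_j(C(G)) < ℓ}|`. -/
def Lcard (G : Network n) (ℓ : ℕ) : ℕ :=
  (univ.filter fun j : Fin n => level G j < ℓ).card

/-- `G` is a sequential hierarchy: weakly connected, no directed cycles, exactly one
SCC per level, and (if more than one level) every node has a single edge towards
every node of strictly higher level. -/
def seqHierarchy (G : Network n) : Prop :=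
  weaklyConnected G ∧ noDirectedCycles G ∧
  (∀ i j : Fin n, level G i = level G j → sameSCC G i j) ∧
  ((∃ i j : Fin n, level G i ≠ level G j) →
    ∀ i j : Fin n, level G i < level G j → (i, j) ∈ G ∧ (j, i) ∉ G)

/-- The better-response update of `G` at the ordered pair `p = (i,j)`. -/
def brUpdate (consensual : Bool) (γ c : ℝ) (H : ℕ → ℝ) (G : Network n)
    (p : Fin n × Fin n) : Network n :=
  if p ∈ G then
    if utility γ c H G p.1 ≤ utility γ c H (G.erase p) p.1 then G.erase p else G
  else if consensual then
    if utility γ c H G p.1 ≤ utility γ c H (insert p G) p.1 ∧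
        utility γ c H G p.2 ≤ utility γ c H (insert p G) p.2 then insert p G else G
  else
    if utility γ c H G p.1 ≤ utility γ c H (insert p G) p.1 then insert p G else G

/-- Equilibrium network for the given agent type. -/
def equilibrium (consensual : Bool) (γ c : ℝ) (H : ℕ → ℝ) (G : Network n) : Prop :=
  if consensual then eqConsensual γ c H G else eqNonConsensual γ c H G


/-- Adding an edge between two nodes already joined by a path does not change reachability. -/
theorem reach_insert_of_reach {G : Network n} {i j : Fin n} (hcyc : reach G j i) :
    reach (insert (j, i) G) = reach G := by
  funext a b
  refine propext ⟨fun h => ?_, fun h =>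
    Relation.ReflTransGen.mono (fun x y hxy => mem_insert_of_mem hxy) _ _ h⟩
  unfold reach at h
  induction h with
  | refl => exact Relation.ReflTransGen.refl
  | tail _ hbc ih =>
    rcases mem_insert.1 hbc with h | h
    · obtain ⟨rfl, rfl⟩ := Prod.mk.inj h
      exact ih.trans hcyc
    · exact ih.tail h

theorem sameSCC_insert_of_reach {G : Network n} {i j : Fin n} (hcyc : reach G j i) :
    sameSCC (insert (j, i) G) = sameSCC G := by
  funext a b
  simp only [sameSCC, reach_insert_of_reach hcyc]

/-- An edge added inside a strongly connected component creates no arc of the condensation. -/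
theorem condArc_insert_of_sameSCC {G : Network n} {i j : Fin n} (h : sameSCC G j i) :
    condArc (insert (j, i) G) = condArc G := by
  funext a b
  simp only [condArc, sameSCC_insert_of_reach h.1]
  refine propext (and_congr_right fun hab => ⟨?_, ?_⟩)
  · rintro ⟨a', b', ha, hb, hmem⟩
    rcases mem_insert.1 hmem with he | he
    · obtain ⟨rfl, rfl⟩ := Prod.mk.inj he
      -- The new edge would put `a` and `b` into one component: `a ~ j ~ i ~ b`.
      exact absurd ⟨(ha.1.trans h.1).trans hb.2, (hb.1.trans h.2).trans ha.2⟩ hab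
    · exact ⟨a', b', ha, hb, he⟩
  · rintro ⟨a', b', ha, hb, hmem⟩
    exact ⟨a', b', ha, hb, mem_insert_of_mem hmem⟩

theorem level_insert_of_sameSCC {G : Network n} {i j : Fin n} (h : sameSCC G j i) (k : Fin n) :
    level (insert (j, i) G) k = level G k := by
  simp only [level, isSourceSCC, condArc_insert_of_sameSCC h, sameSCC_insert_of_reach h.1]

theorem Nout_insert_of_ne {G : Network n} {i j : Fin n} (hne : i ≠ j) :
    Nout (insert (j, i) G) i = Nout G i := by
  ext k
  simp [Nout, hne]

/-- The new in-neighbor `j` of `i` is not a subordinate, because `ij` is an edge. -/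
theorem NinS_insert_of_mem {G : Network n} {i j : Fin n} (hne : i ≠ j) (hij : (i, j) ∈ G) :
    NinS (insert (j, i) G) i = NinS G i := by
  ext k
  simp only [NinS, mem_filter, mem_univ, true_and, mem_insert, Prod.mk.injEq, hne, false_and,
    false_or, and_true]
  constructor
  · rintro ⟨rfl | h, h'⟩
    · exact absurd hij h'
    · exact ⟨h, h'⟩
  · rintro ⟨h, h'⟩
    exact ⟨Or.inr h, h'⟩

theorem Pset_mono {G G' : Network n} (h : G ⊆ G') (i k : Fin n) : Pset G i k ⊆ Pset G' i k := by
  refine insert_subset_insert _ fun x hx => ?_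
  simp only [mem_filter, mem_univ, true_and] at hx ⊢
  exact ⟨h hx.1, h hx.2.1, h hx.2.2⟩

theorem Pset_card_pos (G : Network n) (i k : Fin n) : 0 < (Pset G i k).card :=
  card_pos.2 ⟨i, mem_insert_self _ _⟩

/-- if the single edge `ij` lies on a cycle, a consensual agent `i`
consents to the addition of the edge `ji`. -/
theorem stmt16 {n : ℕ} (hn : 3 ≤ n) (G : Network n) (hG : validNetwork G)
    (i j : Fin n) (hij : (i, j) ∈ G) (hji : (j, i) ∉ G) (hcyc : reach G j i)
    (γ c : ℝ) (H : ℕ → ℝ) (hpar : UtilityParams γ c H) :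
    utility γ c H (insert (j, i) G) i - utility γ c H G i =
      c * ∑ k ∈ NinS G i, ((1 : ℝ) / ((Pset G i k).card : ℝ) -
        (1 : ℝ) / ((Pset (insert (j, i) G) i k).card : ℝ)) ∧
    utility γ c H G i ≤ utility γ c H (insert (j, i) G) i := by
  have hne : i ≠ j := hG _ hij
  have hscc : sameSCC G j i := ⟨hcyc, Relation.ReflTransGen.single hij⟩
  have key : utility γ c H (insert (j, i) G) i - utility γ c H G i =
      c * ∑ k ∈ NinS G i, ((1 : ℝ) / ((Pset G i k).card : ℝ) -
        (1 : ℝ) / ((Pset (insert (j, i) G) i k).card : ℝ)) := by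
    rw [utility, utility, Nout_insert_of_ne hne, NinS_insert_of_mem hne hij,
      level_insert_of_sameSCC hscc, sum_sub_distrib]
    ring
  refine ⟨key, sub_nonneg.1 ?_⟩
  rw [key]
  refine mul_nonneg hpar.2.1.le (sum_nonneg fun k _ => sub_nonneg.2 ?_)
  exact one_div_le_one_div_of_le (Nat.cast_pos.2 (Pset_card_pos G i k))
    (Nat.cast_le.2 (card_le_card (Pset_mono (subset_insert _ _) i k)))

end
end

section
/- Let G be a digraph on N and let i ≠ j be nodes with ℓ_i(C(G)) < ℓ_j(C(G)) and ij ∉ G. Then for any utility parameters (γ,H,c), u_j(G + ij) − u_j(G) = −c/|P_j(G + ij, i)| < 0; in particular, a consensual agent j never consents to acquiring a strictly lower-level agent i as a subordinate. -/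
/-!
Adding the edge `ij` to `G`, where `i` has strictly lower level than `j`, leaves the level of
every node unchanged.  The level function of `G` is weakly increasing along edges of `G`
(`level_le_of_edge`) and strictly increasing along arcs of the condensation
(`level_lt_of_condArc`).  Since it also strictly increases along `ij`, no directed cycle of
`G + ij` uses `ij`; hence `G` and `G + ij` have the same SCCs (`sameSCC_insert`), and `level G`
is still strictly increasing along the arcs of `C(G + ij)`, which bounds path lengths there and
gives `level (G + ij) ≤ level G`.  Conversely a path of `C(G)` starting at a source is one of
`C(G + ij)`: the only SCC receiving a new arc is that of `j`, which has positive level and so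
is not a source.  Together this is `level_insert`.

The rest is bookkeeping: `ji ∉ G` because levels weakly increase along edges, so `j` keeps its
out-neighbours, gains exactly the subordinate `i`, and `P_j(·, k)` is unchanged for the old
subordinates `k` (`NinS_insert`, `Pset_insert`).
-/

open Finset MeasureTheory ProbabilityTheory

attribute [local instance 10] Classical.propDecidable

noncomputable section

variable {n : ℕ}

/-! ### Levels and paths in the condensation -/

/-- There is a path with `m` arcs in the condensation `C(G)` from a source to the SCC of `i`;
`level G i` is the supremum of such `m`. -/
def LevelPath (G : Network n) (i : Fin n) (m : ℕ) : Prop :=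
  ∃ f : ℕ → Fin n, isSourceSCC G (f 0) ∧ sameSCC G (f m) i ∧
    ∀ t, t < m → condArc G (f t) (f (t + 1))

lemma sameSCC_refl (G : Network n) (a : Fin n) : sameSCC G a a :=
  ⟨Relation.ReflTransGen.refl, Relation.ReflTransGen.refl⟩

lemma sameSCC.symm {G : Network n} {a b : Fin n} (h : sameSCC G a b) : sameSCC G b a :=
  ⟨h.2, h.1⟩

lemma sameSCC.trans {G : Network n} {a b d : Fin n} (h : sameSCC G a b) (h' : sameSCC G b d) :
    sameSCC G a d :=
  ⟨Relation.ReflTransGen.trans h.1 h'.1, Relation.ReflTransGen.trans h'.2 h.2⟩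

lemma condArc.congr {G : Network n} {a b a₁ b₁ : Fin n} (h : condArc G a b)
    (ha : sameSCC G a₁ a) (hb : sameSCC G b₁ b) : condArc G a₁ b₁ := by
  obtain ⟨hn, a', b', haa, hbb, he⟩ := h
  exact ⟨fun hs => hn (ha.symm.trans (hs.trans hb)), a', b', ha.trans haa, hb.trans hbb, he⟩

lemma condArc.reach {G : Network n} {a b : Fin n} (h : condArc G a b) : reach G a b := by
  obtain ⟨-, a', b', haa, hbb, he⟩ := h
  exact (Relation.ReflTransGen.tail haa.1 he).trans hbb.2

/-- The number of nodes from which `a` is reachable.  It strictly increases along arcs of the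
condensation and is at most `n`, so it bounds the length of paths in `C(G)`. -/
def ancestorCount (G : Network n) (a : Fin n) : ℕ := (univ.filter fun x => reach G x a).card

lemma ancestorCount_lt {G : Network n} {a b : Fin n} (h : condArc G a b) :
    ancestorCount G a < ancestorCount G b := by
  apply Finset.card_lt_card
  refine Finset.ssubset_iff_of_subset ?_ |>.2 ⟨b, ?_, ?_⟩
  · intro x hx
    simp only [mem_filter, mem_univ, true_and] at hx ⊢
    exact Relation.ReflTransGen.trans hx h.reach
  · simp only [mem_filter, mem_univ, true_and]
    exact Relation.ReflTransGen.refl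
  · simp only [mem_filter, mem_univ, true_and]
    exact fun hb => h.1 ⟨h.reach, hb⟩

/-- A potential that is constant on SCCs and strictly increases along arcs of the condensation
bounds the length of paths. -/
lemma LevelPath.le_potential {G : Network n} {i : Fin n} {m : ℕ} (φ : Fin n → ℕ)
    (hφ : ∀ a b, condArc G a b → φ a < φ b) (hs : ∀ a b, sameSCC G a b → φ a = φ b)
    (h : LevelPath G i m) : m ≤ φ i := by
  obtain ⟨f, -, hm, hf⟩ := h
  have key : ∀ t, t ≤ m → t ≤ φ (f t) := by
    intro t
    induction t with
    | zero => intro _; exact Nat.zero_le _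
    | succ t ih =>
      intro ht
      have h1 := ih (by omega)
      have h2 := hφ _ _ (hf t (by omega))
      omega
  exact (key m le_rfl).trans_eq (hs _ _ hm)

lemma ancestorCount_congr {G : Network n} {a b : Fin n} (h : sameSCC G a b) :
    ancestorCount G a = ancestorCount G b := by
  unfold ancestorCount
  congr 1
  ext x
  simp only [mem_filter, mem_univ, true_and]
  exact ⟨fun hx => Relation.ReflTransGen.trans hx h.1,
    fun hx => Relation.ReflTransGen.trans hx h.2⟩

lemma bddAbove_levelPath (G : Network n) (i : Fin n) : BddAbove {m | LevelPath G i m} :=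
  ⟨ancestorCount G i, fun _ hm => LevelPath.le_potential _ (fun _ _ => ancestorCount_lt)
    (fun _ _ => ancestorCount_congr) hm⟩

lemma LevelPath.le_level {G : Network n} {i : Fin n} {m : ℕ} (h : LevelPath G i m) :
    m ≤ level G i :=
  le_csSup (bddAbove_levelPath G i) h

lemma LevelPath.extend {G : Network n} {a b : Fin n} {m : ℕ} (h : LevelPath G a m)
    (hab : condArc G a b) : LevelPath G b (m + 1) := by
  obtain ⟨f, h0, hm, hf⟩ := h
  refine ⟨fun t => if t ≤ m then f t else b, by simpa using h0, ?_, ?_⟩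
  · simpa using sameSCC_refl G b
  · intro t ht
    rcases Nat.lt_or_ge t m with h | h
    · simpa [h.le, Nat.succ_le_of_lt h] using hf t h
    · obtain rfl : t = m := by omega
      simpa using hab.congr hm (sameSCC_refl G b)

/-- Every SCC is reached from a source, so the supremum defining the level is over a nonempty
set. -/
lemma exists_levelPath (G : Network n) (i : Fin n) : ∃ m, LevelPath G i m := by
  induction h : ancestorCount G i using Nat.strong_induction_on generalizing i with
  | _ k ih =>
    by_cases hi : isSourceSCC G i
    · exact ⟨0, fun _ => i, hi, sameSCC_refl G i, fun t ht => absurd ht (Nat.not_lt_zero t)⟩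
    · unfold isSourceSCC at hi
      push Not at hi
      obtain ⟨b, hb⟩ := hi
      obtain ⟨m, hm⟩ := ih _ (h ▸ ancestorCount_lt hb) b rfl
      exact ⟨m + 1, hm.extend hb⟩

lemma levelPath_level (G : Network n) (i : Fin n) : LevelPath G i (level G i) :=
  Nat.sSup_mem (exists_levelPath G i) (bddAbove_levelPath G i)

lemma level_lt_of_condArc {G : Network n} {a b : Fin n} (h : condArc G a b) :
    level G a < level G b :=
  ((levelPath_level G a).extend h).le_level

lemma level_congr {G : Network n} {a b : Fin n} (h : sameSCC G a b) : level G a = level G b := by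
  have key : ∀ {x y : Fin n}, sameSCC G x y → level G x ≤ level G y := by
    intro x y hxy
    obtain ⟨f, h0, hm, hf⟩ := levelPath_level G x
    exact LevelPath.le_level ⟨f, h0, hm.trans hxy, hf⟩
  exact le_antisymm (key h) (key h.symm)

lemma level_le_of_edge {G : Network n} {a b : Fin n} (h : (a, b) ∈ G) :
    level G a ≤ level G b := by
  by_cases hs : sameSCC G a b
  · exact (level_congr hs).le
  · exact (level_lt_of_condArc ⟨hs, a, b, sameSCC_refl G a, sameSCC_refl G b, h⟩).le

lemma isSourceSCC.level_eq_zero {G : Network n} {a : Fin n} (h : isSourceSCC G a) :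
    level G a = 0 := by
  obtain ⟨f, -, hm, hf⟩ := levelPath_level G a
  by_contra hne
  obtain ⟨m, hm'⟩ := Nat.exists_eq_succ_of_ne_zero hne
  rw [hm'] at hm hf
  exact h _ ((hf m (Nat.lt_succ_self m)).congr (sameSCC_refl G _) hm.symm)

/-! ### Invariance of levels under an added upward edge -/

lemma reach_insert_of_reach_s18 {G : Network n} {p : Fin n × Fin n} {a b : Fin n}
    (h : reach G a b) : reach (insert p G) a b :=
  Relation.ReflTransGen.mono (fun _ _ he => Finset.mem_insert_of_mem he) _ _ h

/-- A walk of `G + ij` either avoids `ij` or strictly increases the level. -/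
lemma reach_of_reach_insert {G : Network n} {i j a b : Fin n} (hlev : level G i < level G j)
    (h : reach (insert (i, j) G) a b) :
    level G a ≤ level G b ∧ (reach G a b ∨ level G a < level G b) := by
  induction h with
  | refl => exact ⟨le_rfl, Or.inl Relation.ReflTransGen.refl⟩
  | @tail x y _ he ih =>
    rcases Finset.mem_insert.1 he with he | he
    · obtain ⟨rfl, rfl⟩ := Prod.mk.inj he
      exact ⟨by omega, Or.inr (by omega)⟩
    · have hxy := level_le_of_edge he
      refine ⟨by omega, ?_⟩
      rcases ih.2 with h | h
      · exact Or.inl (Relation.ReflTransGen.tail h he)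
      · exact Or.inr (by omega)

lemma sameSCC_insert {G : Network n} {i j : Fin n} (hlev : level G i < level G j)
    (a b : Fin n) : sameSCC (insert (i, j) G) a b ↔ sameSCC G a b := by
  constructor
  · rintro ⟨h1, h2⟩
    obtain ⟨l1, r1⟩ := reach_of_reach_insert hlev h1
    obtain ⟨l2, r2⟩ := reach_of_reach_insert hlev h2
    exact ⟨r1.resolve_right (by omega), r2.resolve_right (by omega)⟩
  · rintro ⟨h1, h2⟩
    exact ⟨reach_insert_of_reach_s18 h1, reach_insert_of_reach_s18 h2⟩

/-- The arcs of `C(G + ij)` are those of `C(G)` and the arc from the SCC of `i` to that of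
`j`. -/
lemma condArc_insert {G : Network n} {i j : Fin n} (hlev : level G i < level G j)
    (a b : Fin n) : condArc (insert (i, j) G) a b ↔
      condArc G a b ∨ (sameSCC G a i ∧ sameSCC G b j) := by
  simp only [condArc, sameSCC_insert hlev]
  constructor
  · rintro ⟨hn, a', b', ha, hb, he⟩
    rcases Finset.mem_insert.1 he with he | he
    · obtain ⟨rfl, rfl⟩ := Prod.mk.inj he
      exact Or.inr ⟨ha, hb⟩
    · exact Or.inl ⟨hn, a', b', ha, hb, he⟩
  · rintro (⟨hn, a', b', ha, hb, he⟩ | ⟨ha, hb⟩)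
    · exact ⟨hn, a', b', ha, hb, Finset.mem_insert_of_mem he⟩
    · refine ⟨fun hs => ?_, i, j, ha, hb, Finset.mem_insert_self _ _⟩
      have := level_congr (ha.symm.trans (hs.trans hb))
      omega

/-- Adding an edge towards a node of strictly higher level changes no level. -/
lemma level_insert {G : Network n} {i j : Fin n} (hlev : level G i < level G j) (k : Fin n) :
    level (insert (i, j) G) k = level G k := by
  apply le_antisymm
  · refine LevelPath.le_potential (level G) ?_ ?_ (levelPath_level _ k)
    · intro a b hab
      rcases (condArc_insert hlev a b).1 hab with h | ⟨ha, hb⟩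
      · exact level_lt_of_condArc h
      · rwa [level_congr ha, level_congr hb]
    · exact fun a b hab => level_congr ((sameSCC_insert hlev a b).1 hab)
  · obtain ⟨f, h0, hm, hf⟩ := levelPath_level G k
    refine LevelPath.le_level ⟨f, ?_, (sameSCC_insert hlev _ _).2 hm,
      fun t ht => (condArc_insert hlev _ _).2 (Or.inl (hf t ht))⟩
    intro b hb
    rcases (condArc_insert hlev _ _).1 hb with h | ⟨-, h⟩
    · exact h0 b h
    · have h1 := h0.level_eq_zero
      have h2 := level_congr h
      omega

/-! ### Neighbourhoods and the utility of `j` -/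

lemma Nout_insert {G : Network n} {i j : Fin n} (hne : i ≠ j) :
    Nout (insert (i, j) G) j = Nout G j := by
  ext k
  simp [Nout, hne.symm]

lemma NinS_insert {G : Network n} {i j : Fin n} (hne : i ≠ j) (hji : (j, i) ∉ G) :
    NinS (insert (i, j) G) j = insert i (NinS G j) := by
  ext k
  simp only [NinS, mem_filter, mem_univ, true_and, mem_insert, Prod.mk.injEq, and_true]
  constructor
  · tauto
  · rintro (rfl | h)
    · exact ⟨Or.inl rfl, by tauto⟩
    · exact ⟨Or.inr h.1, fun h' => h'.elim (fun e => hne e.1.symm) h.2⟩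

lemma Pset_insert {G : Network n} {i j k : Fin n} (hne : i ≠ j) (hji : (j, i) ∉ G)
    (hk : k ≠ i) : Pset (insert (i, j) G) j k = Pset G j k := by
  unfold Pset
  congr 1
  ext l
  simp only [mem_filter, mem_univ, true_and, mem_insert, Prod.mk.injEq, and_true]
  constructor
  · rintro ⟨h1, h2, h3⟩
    have h1' := h1.resolve_left fun e => hk e.1
    have h2' := h2.resolve_left fun e => hne e.1.symm
    exact ⟨h1', h2', h3.resolve_left fun e => hji (e ▸ h2')⟩
  · tauto

/-- a consensual agent `j` never consents to acquiring a strictly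
lower-level agent `i` as a subordinate. -/
theorem stmt18 {n : ℕ} (hn : 3 ≤ n) (G : Network n) (hG : validNetwork G)
    (i j : Fin n) (hne : i ≠ j) (hlev : level G i < level G j) (hij : (i, j) ∉ G)
    (γ c : ℝ) (H : ℕ → ℝ) (hpar : UtilityParams γ c H) :
    utility γ c H (insert (i, j) G) j - utility γ c H G j =
      -c / ((Pset (insert (i, j) G) j i).card : ℝ) ∧
    utility γ c H (insert (i, j) G) j < utility γ c H G j := by
  obtain ⟨-, hc, -, -⟩ := hpar
  have hji : (j, i) ∉ G := fun h => absurd (level_le_of_edge h) (not_le.2 hlev)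
  have hi : i ∉ NinS G j := by simp [NinS, hij]
  have hsum : ∑ k ∈ NinS G j, (1 : ℝ) / ((Pset (insert (i, j) G) j k).card : ℝ) =
      ∑ k ∈ NinS G j, (1 : ℝ) / ((Pset G j k).card : ℝ) :=
    Finset.sum_congr rfl fun k hk => by
      rw [Pset_insert hne hji (fun e => hi (e ▸ hk))]
  have heq : utility γ c H (insert (i, j) G) j - utility γ c H G j =
      -c / ((Pset (insert (i, j) G) j i).card : ℝ) := by
    unfold utility
    rw [Nout_insert hne, level_insert hlev, NinS_insert hne hji, Finset.sum_insert hi, hsum]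
    ring
  refine ⟨heq, ?_⟩
  have hpos : (0 : ℝ) < ((Pset (insert (i, j) G) j i).card : ℝ) :=
    Nat.cast_pos.2 (Finset.card_pos.2 ⟨j, Finset.mem_insert_self _ _⟩)
  have hneg : -c / ((Pset (insert (i, j) G) j i).card : ℝ) < 0 :=
    div_neg_of_neg_of_pos (neg_lt_zero.2 hc) hpos
  linarith

end
end

section
/- Let G be a sequential hierarchy on N all of whose strongly connected components are complete connected components, with more than one level, and let i, j ∈ N be nodes with ℓ := ℓ_i(C(G)) ≥ 1 and ℓ_j(C(G)) = ℓ − 1 (so that ji ∈ G and ij ∉ G). Then for any utility parameters (γ,H,c), u_i(G + ij) − u_i(G) = H(ℓ−1) − H(ℓ) + γ + c·(|P_i(G)| + L_ℓ(G)) / (|P_i(G)|·(|P_i(G)| + 1)). -/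
/-!
In a sequential hierarchy with complete components, `(a, b)` is an edge iff `a ≠ b` and
`level a ≤ level b`; every value up to `ℓ = level i` is a level. Adding the edge `ij` merges the
components of levels `ℓ - 1` and `ℓ` and changes no other reachability, so collapsing these two
values gives a rank function on `G + ij`, and `level_eq_of_rank` identifies it with the level:
node `i` drops to level `ℓ - 1`.

On the cost side, `N_in^s(i, G)` consists of the `L` nodes of level below `ℓ`, each with
`P_i(G, k) = P_i(G)`, of size `p`. In `G + ij` the node `j` is no longer a subordinate of `i`, and
it joins `P_i(G, k)` for each of the other `L - 1` subordinates. The cost thus changes from `c L / p`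
to `c (L - 1) / (p + 1)`, and `L / p - (L - 1) / (p + 1) = (p + L) / (p (p + 1))`.
-/

open Finset MeasureTheory ProbabilityTheory

attribute [local instance 10] Classical.propDecidable

noncomputable section

variable {n : ℕ}

lemma rank_le_of_reach {G : Network n} {r : Fin n → ℕ}
    (hmono : ∀ a b, (a, b) ∈ G → r a ≤ r b) {a b : Fin n} (h : reach G a b) : r a ≤ r b := by
  induction h with
  | refl => exact le_rfl
  | tail _ h2 ih => exact ih.trans (hmono _ _ h2)

lemma rank_eq_of_sameSCC {G : Network n} {r : Fin n → ℕ}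
    (hmono : ∀ a b, (a, b) ∈ G → r a ≤ r b) {a b : Fin n} (h : sameSCC G a b) : r a = r b :=
  le_antisymm (rank_le_of_reach hmono h.1) (rank_le_of_reach hmono h.2)

lemma rank_lt_of_condArc {G : Network n} {r : Fin n → ℕ}
    (hmono : ∀ a b, (a, b) ∈ G → r a ≤ r b) (hscc : ∀ a b, r a = r b → sameSCC G a b)
    {a b : Fin n} (h : condArc G a b) : r a < r b := by
  obtain ⟨hn, a', b', ha, hb, hab⟩ := h
  have h1 := rank_eq_of_sameSCC hmono ha
  have h2 := rank_eq_of_sameSCC hmono hb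
  have h3 := hmono _ _ hab
  have h4 : r a ≠ r b := fun h => hn (hscc _ _ h)
  omega

/-- If edges do not decrease `r`, the fibres of `r` are strongly connected, lower rank always
points to higher rank, and all ranks up to `r i` occur, then the level of `i` is `r i`. -/
lemma level_eq_of_rank {G : Network n} {r : Fin n → ℕ} {i : Fin n}
    (hmono : ∀ a b, (a, b) ∈ G → r a ≤ r b) (hscc : ∀ a b, r a = r b → sameSCC G a b)
    (hedge : ∀ a b, r a < r b → (a, b) ∈ G) (hsurj : ∀ t ≤ r i, ∃ a, r a = t) :
    level G i = r i := by
  refine IsGreatest.csSup_eq ⟨?_, ?_⟩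
  · have hs : ∀ t, ∃ a, t ≤ r i → r a = t := fun t => by
      by_cases h : t ≤ r i
      · obtain ⟨a, ha⟩ := hsurj t h
        exact ⟨a, fun _ => ha⟩
      · exact ⟨i, fun h' => absurd h' h⟩
    choose f hf using hs
    refine ⟨f, ?_, hscc _ _ (hf _ le_rfl), ?_⟩
    · intro b hb
      have := rank_lt_of_condArc hmono hscc hb
      rw [hf 0 (Nat.zero_le _)] at this
      omega
    · intro t ht
      have h1 := hf t ht.le
      have h2 := hf (t + 1) ht
      refine ⟨fun h => ?_, f t, f (t + 1), ⟨.refl, .refl⟩, ⟨.refl, .refl⟩, hedge _ _ (by omega)⟩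
      have := rank_eq_of_sameSCC hmono h
      omega
  · rintro m ⟨f, -, hm, hf⟩
    have key : ∀ t, t ≤ m → t ≤ r (f t) := by
      intro t
      induction t with
      | zero => intro _; omega
      | succ t ih =>
        intro ht
        have h1 := ih (by omega)
        have h2 := rank_lt_of_condArc hmono hscc (hf t ht)
        omega
    have h1 := key m le_rfl
    have h2 := rank_eq_of_sameSCC hmono hm
    omega

/-- Every value up to the level of `i` is the level of some node on a longest path to `i`. -/
lemma exists_level_eq {G : Network n} {i : Fin n}
    (hmono : ∀ a b, (a, b) ∈ G → level G a ≤ level G b)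
    (hscc : ∀ a b, level G a = level G b → sameSCC G a b) (hi : 1 ≤ level G i) :
    ∀ t ≤ level G i, ∃ a, level G a = t := by
  have hmem : level G i ∈ {m : ℕ | ∃ f : ℕ → Fin n, isSourceSCC G (f 0) ∧ sameSCC G (f m) i ∧
      ∀ t, t < m → condArc G (f t) (f (t + 1))} := by
    -- A positive supremum in `ℕ` is attained, since empty and unbounded sets have supremum `0`.
    by_contra hcon
    have h0 : level G i = 0 := by
      by_cases hb : BddAbove {m : ℕ | ∃ f : ℕ → Fin n, isSourceSCC G (f 0) ∧
          sameSCC G (f m) i ∧ ∀ t, t < m → condArc G (f t) (f (t + 1))}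
      · rcases Set.eq_empty_or_nonempty {m : ℕ | ∃ f : ℕ → Fin n, isSourceSCC G (f 0) ∧
          sameSCC G (f m) i ∧ ∀ t, t < m → condArc G (f t) (f (t + 1))} with he | hne
        · rw [level, he]; simp
        · exact absurd (Nat.sSup_mem hne hb) hcon
      · exact Nat.sSup_of_not_bddAbove hb
    omega
  obtain ⟨f, -, hm, hf⟩ := hmem
  have hend := rank_eq_of_sameSCC hmono hm
  have low : ∀ t, t ≤ level G i → t ≤ level G (f t) := by
    intro t
    induction t with
    | zero => intro _; omega
    | succ t ih =>
      intro ht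
      have h1 := ih (by omega)
      have h2 := rank_lt_of_condArc hmono hscc (hf t ht)
      omega
  have high : ∀ s, s ≤ level G i → level G (f (level G i - s)) + s ≤ level G i := by
    intro s
    induction s with
    | zero => intro _; simp [hend]
    | succ s ih =>
      intro hs
      have h1 := ih (by omega)
      have h2 := rank_lt_of_condArc hmono hscc (hf (level G i - (s + 1)) (by omega))
      rw [show level G i - (s + 1) + 1 = level G i - s by omega] at h2
      omega
  intro t ht
  refine ⟨f t, ?_⟩
  have h1 := low t ht
  have h2 := high (level G i - t) (by omega)
  rw [show level G i - (level G i - t) = t by omega] at h2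
  omega

lemma reach_insert {G : Network n} {e : Fin n × Fin n} {a b : Fin n} (h : reach G a b) :
    reach (insert e G) a b :=
  Relation.ReflTransGen.mono (fun _ _ hab => mem_insert_of_mem hab) _ _ h

/-- Adding an edge from `i` to a node `j` one level below moves `i` down by one level. -/
lemma level_insert_back {G : Network n} {i j : Fin n}
    (hmono : ∀ a b, (a, b) ∈ G → level G a ≤ level G b)
    (hscc : ∀ a b, level G a = level G b → sameSCC G a b)
    (hedge : ∀ a b, level G a < level G b → (a, b) ∈ G)
    (hi : 1 ≤ level G i) (hj : level G j = level G i - 1) :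
    level (insert (i, j) G) i = level G i - 1 := by
  -- The rank on the enlarged network: levels `ℓ - 1` and `ℓ` are identified.
  set r : Fin n → ℕ := fun a => if level G a < level G i then level G a else level G a - 1 with hr
  have hri : r i = level G i - 1 := by simp [hr]
  rw [← hri]
  -- A node of level `ℓ` reaches a node of level `ℓ - 1` through the new edge.
  have back : ∀ a b, level G a = level G i → level G b = level G j →
      reach (insert (i, j) G) a b := fun a b ha hb =>
    ((reach_insert (hscc a i ha).1).tail (mem_insert_self _ _)).trans
      (reach_insert (hscc b j hb).2)
  have forth : ∀ a b, level G a < level G b → reach (insert (i, j) G) a b := fun a b h =>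
    .single (mem_insert_of_mem (hedge a b h))
  apply level_eq_of_rank
  · intro a b hab
    rcases mem_insert.1 hab with h | h
    · obtain ⟨rfl, rfl⟩ := Prod.mk.inj h
      simp only [hr]; split_ifs <;> omega
    · have := hmono a b h
      simp only [hr]; split_ifs <;> omega
  · intro a b hab
    rcases lt_trichotomy (level G a) (level G b) with h | h | h
    · have : level G b = level G i ∧ level G a = level G j := by
        simp only [hr] at hab; split_ifs at hab <;> omega
      exact ⟨forth _ _ h, back _ _ this.1 this.2⟩
    · exact ⟨reach_insert (hscc _ _ h).1, reach_insert (hscc _ _ h).2⟩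
    · have : level G a = level G i ∧ level G b = level G j := by
        simp only [hr] at hab; split_ifs at hab <;> omega
      exact ⟨back _ _ this.1 this.2, forth _ _ h⟩
  · intro a b hab
    refine mem_insert_of_mem (hedge a b ?_)
    simp only [hr] at hab; split_ifs at hab <;> omega
  · intro t ht
    obtain ⟨a, ha⟩ := exists_level_eq hmono hscc hi t (by omega)
    refine ⟨a, ?_⟩
    simp only [hr]; split_ifs <;> omega

/-- in a sequential hierarchy with complete SCCs and more than one level,
the utility change for `i` of establishing an immediate backward connection. -/
theorem stmt19 {n : ℕ} (hn : 3 ≤ n) (G : Network n) (hG : validNetwork G)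
    (hsh : seqHierarchy G) (hcomp : completeSCCs G)
    (hlevels : ∃ p q : Fin n, level G p ≠ level G q)
    (i j : Fin n) (hℓ : 1 ≤ level G i) (hj : level G j = level G i - 1)
    (hji : (j, i) ∈ G) (hij : (i, j) ∉ G)
    (γ c : ℝ) (H : ℕ → ℝ) (hpar : UtilityParams γ c H) :
    utility γ c H (insert (i, j) G) i - utility γ c H G i =
      H (level G i - 1) - H (level G i) + γ +
        c * ((((Pall G i).card : ℝ) + (Lcard G (level G i) : ℝ)) /
          (((Pall G i).card : ℝ) * (((Pall G i).card : ℝ) + 1))) := by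
  obtain ⟨-, -, hscc, hstep⟩ := hsh
  have hstep := hstep hlevels
  have hmono : ∀ a b, (a, b) ∈ G → level G a ≤ level G b := fun a b hab => by
    by_contra h
    exact (hstep b a (by omega)).2 hab
  have hmem : ∀ a b, (a, b) ∈ G ↔ a ≠ b ∧ level G a ≤ level G b := by
    refine fun a b => ⟨fun h => ⟨hG _ h, hmono a b h⟩, fun ⟨hne, h⟩ => ?_⟩
    rcases h.lt_or_eq with h | h
    · exact (hstep a b h).1
    · exact (hcomp a b hne (hscc a b h)).1
  have hlev := level_insert_back hmono hscc (fun a b h => (hstep a b h).1) hℓ hj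
  have hne : i ≠ j := by rintro rfl; omega
  have hNout : Nout (insert (i, j) G) i = insert j (Nout G i) := by
    ext a; simp [Nout]
  have hNoutc : (Nout (insert (i, j) G) i).card = (Nout G i).card + 1 := by
    rw [hNout, card_insert_of_notMem]
    simpa [Nout] using hij
  have hNin : NinS G i = univ.filter fun a => level G a < level G i := by
    ext a
    simp only [NinS, mem_filter, mem_univ, true_and, hmem]
    constructor
    · rintro ⟨⟨h1, h2⟩, h3⟩
      by_contra h
      exact h3 ⟨h1.symm, by omega⟩
    · intro h
      exact ⟨⟨by rintro rfl; omega, h.le⟩, fun h' => by omega⟩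
  have hjN : j ∈ NinS G i := by simp [NinS, hij, hji]
  have hNin' : NinS (insert (i, j) G) i = (NinS G i).erase j := by
    ext a
    simp only [NinS, mem_filter, mem_univ, true_and, mem_insert, Prod.mk.injEq, mem_erase]
    constructor
    · rintro ⟨h1, h2⟩
      push Not at h2
      refine ⟨h2.1, h1.resolve_left ?_, h2.2⟩
      rintro ⟨-, h⟩; exact hne h
    · rintro ⟨h1, h2, h3⟩
      exact ⟨Or.inr h2, by tauto⟩
  have hP : ∀ k ∈ NinS G i, Pset G i k = univ.filter fun a => level G a = level G i := by
    intro k hk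
    rw [hNin, mem_filter] at hk
    ext a
    simp only [Pset, mem_insert, mem_filter, mem_univ, true_and, hmem]
    constructor
    · rintro (rfl | ⟨-, h1, h2⟩)
      · rfl
      · omega
    · intro h
      by_cases hai : a = i
      · exact Or.inl hai
      · exact Or.inr ⟨⟨by rintro rfl; omega, by omega⟩, ⟨Ne.symm hai, by omega⟩, hai, by omega⟩
  have hPall : Pall G i = univ.filter fun a => level G a = level G i := by
    ext a
    simp only [Pall, mem_filter, mem_univ, true_and]
    constructor
    · intro h
      have := h j hjN
      rw [hP j hjN] at this
      simpa using this
    · intro h k hk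
      rw [hP k hk]
      simpa using h
  have hP' : ∀ k ∈ (NinS G i).erase j,
      Pset (insert (i, j) G) i k = insert j (Pset G i k) := by
    intro k hk
    obtain ⟨hkj, hk⟩ := mem_erase.1 hk
    rw [hNin, mem_filter] at hk
    have hki : k ≠ i := by rintro rfl; omega
    have hkjG : (k, j) ∈ G := (hmem k j).2 ⟨hkj, by omega⟩
    ext a
    simp only [Pset, mem_insert, mem_filter, mem_univ, true_and, Prod.mk.injEq]
    constructor
    · rintro (h | ⟨h1, h2, h3⟩)
      · exact Or.inr (Or.inl h)
      · by_cases haj : a = j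
        · exact Or.inl haj
        · have h3' : (a, i) ∈ G := h3.resolve_left fun h => hne h.2
          refine Or.inr (Or.inr ⟨h1.resolve_left fun h => hki h.1, ?_, h3'⟩)
          exact h2.resolve_left haj
    · rintro (rfl | h | ⟨h1, h2, h3⟩)
      · exact Or.inr ⟨Or.inr hkjG, Or.inl rfl, Or.inr hji⟩
      · exact Or.inl h
      · exact Or.inr ⟨Or.inr h1, Or.inr h2, Or.inr h3⟩
  have hjP : j ∉ Pall G i := by
    rw [hPall, mem_filter]
    rintro ⟨-, h⟩
    omega
  have hL : (NinS G i).card = Lcard G (level G i) := by rw [hNin, Lcard]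
  have hsum : ∑ k ∈ NinS G i, (1 : ℝ) / ((Pset G i k).card : ℝ)
      = (Lcard G (level G i) : ℝ) * (1 / ((Pall G i).card : ℝ)) := by
    rw [sum_congr rfl fun k hk => by rw [hP k hk, ← hPall], sum_const, hL, nsmul_eq_mul]
  have hLpos : 1 ≤ (NinS G i).card := card_pos.2 ⟨j, hjN⟩
  have hsum' : ∑ k ∈ NinS (insert (i, j) G) i,
      (1 : ℝ) / ((Pset (insert (i, j) G) i k).card : ℝ)
      = ((Lcard G (level G i) : ℝ) - 1) * (1 / (((Pall G i).card : ℝ) + 1)) := by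
    rw [hNin', sum_congr rfl fun k hk => by
      rw [hP' k hk, hP k (mem_of_mem_erase hk), ← hPall, card_insert_of_notMem hjP],
      sum_const, card_erase_of_mem hjN, nsmul_eq_mul, Nat.cast_sub hLpos, hL]
    push_cast
    ring
  have hp : (0 : ℝ) < ((Pall G i).card : ℝ) := by
    rw [Nat.cast_pos, card_pos, hPall]
    exact ⟨i, by simp⟩
  rw [utility, utility, hlev, hsum, hsum', hNoutc]
  push_cast
  field_simp
  ring

end
end
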